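/- arXiv:1805.11980 — 2 statements merged into one kernel-verified Lean document; each statement's English description precedes it below -/
import Mathlib

section
/- Let A = σ(R)⟨x_1,…,x_n⟩ be a skew PBW extension of a ring R with the elements c_{i,j} of condition (iv) central in R. If R is Σ-compatible and (Σ,Δ)-skew Armendariz, then R is skew Π-Armendariz with respect to A. -/
/-!
The key fact is that `R` behaves as if `A` were graded: if `a x^α · b x^β = 0` then `a b = 0`.
To see it, filter `A` by the length of words in the variables (`lower d` is spanned by the words
shorter than `d`). Modulo shorter words, scalars pass through a word at the price of the `σ i`
(`word_mul_ι`), and the letters of a word may be permuted at the price of a product of images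
`σ_w (c i j)` (`exists_word_sub_mem_lower`). Hence standard monomials span each step of the
filtration, so `ι r * x^α` is a combination of shorter words only for `r = 0`
(`eq_zero_of_mul_mono_mem`). Comparing `x_i x_j` with the result of swapping its letters twice
gives `c j i * c i j = 1`, and centrality turns the `c i j` into units. So
`a x^α · b x^β` has leading coefficient `a σ^α(b) u` with `u` a unit, and `Σ`-compatibility
yields `a b = 0`.

Combined with the skew Armendariz condition this shows that `r f h = 0` implies `r a_i h = 0` for
every coefficient `a_i` of `f`. Stripping the factors of `(f g)^k = 0` one at a time from the left
gives `(a_i b_j)^k = 0`.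
-/

open scoped BigOperators

/-- Iterated "power composition": given a family of maps `f i` and multiplicities `k i`,
`iterPow f k = (f 0)^[k 0] ∘ (f 1)^[k 1] ∘ ⋯ ∘ (f (n-1))^[k (n-1)]`.
For a family of endomorphisms `σ` this is `σ^α = σ₁^{α₁} ∘ ⋯ ∘ σₙ^{αₙ}`. -/
def iterPow {α : Type*} {n : ℕ} (f : Fin n → α → α) (k : Fin n → ℕ) : α → α :=
  (((List.finRange n).map fun i => (f i)^[k i]).foldr (· ∘ ·) id)

/-- A skew PBW extension `A = σ(R)⟨x₁,…,xₙ⟩` of a ring `R`. -/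
structure SkewPBW (R A : Type*) [Ring R] [Ring A] (n : ℕ) where
  /-- the inclusion `R ⊆ A` (a ring embedding) -/
  ι : R →+* A
  ι_inj : Function.Injective ι
  /-- the variables `x₁,…,xₙ` -/
  x : Fin n → A
  /-- `A` is a free left `R`-module with basis the standard monomials
  `x^α = x₁^{α₁} ⋯ xₙ^{αₙ}`: every element of `A` is a unique finite
  `R`-linear combination of standard monomials. -/
  free : Function.Bijective
    (fun c : (Fin n → ℕ) →₀ R =>
      c.sum fun α r => ι r * (((List.finRange n).map fun i => x i ^ α i).prod))
  /-- condition (iii): for each `i` and each nonzero `r ∈ R` there is a nonzero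
  `c_{i,r} ∈ R` with `xᵢ r − c_{i,r} xᵢ ∈ R` -/
  lin : ∀ (i : Fin n) (r : R), r ≠ 0 → ∃ cr : R, cr ≠ 0 ∧
    ∃ r' : R, x i * ι r - ι cr * x i = ι r'
  /-- the constants `c_{i,j}` of condition (iv) -/
  c : Fin n → Fin n → R
  c_ne : ∀ i j, c i j ≠ 0
  /-- condition (iv): `xⱼ xᵢ − c_{i,j} xᵢ xⱼ ∈ R + R x₁ + ⋯ + R xₙ` -/
  quad : ∀ i j, ∃ (r₀ : R) (r : Fin n → R),
    x j * x i - ι (c i j) * (x i * x j) = ι r₀ + ∑ k, ι (r k) * x k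
  /-- the injective endomorphisms `σᵢ` -/
  σ : Fin n → R →+* R
  σ_inj : ∀ i, Function.Injective (σ i)
  /-- the `σᵢ`-derivations `δᵢ` -/
  δ : Fin n → R → R
  δ_add : ∀ (i : Fin n) (a b : R), δ i (a + b) = δ i a + δ i b
  δ_leibniz : ∀ (i : Fin n) (a b : R), δ i (a * b) = σ i a * δ i b + δ i a * b
  /-- the fundamental relation `xᵢ r = σᵢ(r) xᵢ + δᵢ(r)` -/
  comm : ∀ (i : Fin n) (r : R), x i * ι r = ι (σ i r) * x i + ι (δ i r)

namespace SkewPBW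

variable {R A : Type*} [Ring R] [Ring A] {n : ℕ}

/-- The standard monomial `x^α = x₁^{α₁} ⋯ xₙ^{αₙ}`. -/
def mono (S : SkewPBW R A n) (α : Fin n → ℕ) : A :=
  ((List.finRange n).map fun i => S.x i ^ α i).prod

/-- `σ^α = σ₁^{α₁} ∘ ⋯ ∘ σₙ^{αₙ}`. -/
def sigmaPow (S : SkewPBW R A n) (α : Fin n → ℕ) : R → R :=
  iterPow (fun i => ⇑(S.σ i)) α

/-- `δ^α = δ₁^{α₁} ∘ ⋯ ∘ δₙ^{αₙ}`. -/
def deltaPow (S : SkewPBW R A n) (α : Fin n → ℕ) : R → R :=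
  iterPow S.δ α

/-- `R` is `Σ`-compatible: `a σ^α(b) = 0 ↔ a b = 0`. -/
def SigmaCompatible (S : SkewPBW R A n) : Prop :=
  ∀ (a b : R) (α : Fin n → ℕ), a * S.sigmaPow α b = 0 ↔ a * b = 0

/-- `R` is `Δ`-compatible: `a b = 0 → a δ^β(b) = 0`. -/
def DeltaCompatible (S : SkewPBW R A n) : Prop :=
  ∀ a b : R, a * b = 0 → ∀ β : Fin n → ℕ, a * S.deltaPow β b = 0

/-- `R` is `(Σ,Δ)`-compatible. -/
def SigmaDeltaCompatible (S : SkewPBW R A n) : Prop :=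
  S.SigmaCompatible ∧ S.DeltaCompatible

/-- The elements `c_{i,j}` of condition (iv) are central in `R`. -/
def CCentral (S : SkewPBW R A n) : Prop :=
  ∀ (i j : Fin n) (r : R), S.c i j * r = r * S.c i j

/-- `R` is `(Σ,Δ)`-skew Armendariz with respect to `A`:
if `fg = 0` then `aᵢXᵢ · bⱼYⱼ = 0` for all coefficients/monomials of `f` and `g`. -/
def SDSkewArmendariz (S : SkewPBW R A n) : Prop :=
  ∀ (t s : ℕ) (a : Fin (t + 1) → R) (X : Fin (t + 1) → Fin n → ℕ)
    (b : Fin (s + 1) → R) (Y : Fin (s + 1) → Fin n → ℕ),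
    Function.Injective X → Function.Injective Y →
    (∑ i, S.ι (a i) * S.mono (X i)) * (∑ j, S.ι (b j) * S.mono (Y j)) = 0 →
    ∀ i j, (S.ι (a i) * S.mono (X i)) * (S.ι (b j) * S.mono (Y j)) = 0

/-- `R` is `Σ`-skew Armendariz with respect to `A`:
if `fg = 0` then `aᵢ σ^{αᵢ}(bⱼ) = 0` where `αᵢ = exp(Xᵢ)`. -/
def SigmaSkewArmendariz (S : SkewPBW R A n) : Prop :=
  ∀ (m t : ℕ) (a : Fin (m + 1) → R) (X : Fin (m + 1) → Fin n → ℕ)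
    (b : Fin (t + 1) → R) (Y : Fin (t + 1) → Fin n → ℕ),
    Function.Injective X → Function.Injective Y →
    (∑ i, S.ι (a i) * S.mono (X i)) * (∑ j, S.ι (b j) * S.mono (Y j)) = 0 →
    ∀ i j, a i * S.sigmaPow (X i) (b j) = 0

/-- `R` is skew `Π`-Armendariz with respect to `A`:
if `fg` is nilpotent in `A`, then `aᵢ bⱼ` is nilpotent in `R` for all `i, j`. -/
def SkewPiArmendariz (S : SkewPBW R A n) : Prop :=
  ∀ (m t : ℕ) (a : Fin (m + 1) → R) (X : Fin (m + 1) → Fin n → ℕ)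
    (b : Fin (t + 1) → R) (Y : Fin (t + 1) → Fin n → ℕ),
    Function.Injective X → Function.Injective Y →
    IsNilpotent ((∑ i, S.ι (a i) * S.mono (X i)) * (∑ j, S.ι (b j) * S.mono (Y j))) →
    ∀ i j, IsNilpotent (a i * b j)

end SkewPBW

/-- A ring is reversible if `a b = 0` implies `b a = 0`. -/
def IsReversible (R : Type*) [Ring R] : Prop :=
  ∀ a b : R, a * b = 0 → b * a = 0

namespace SkewPBW

variable {R A : Type*} [Ring R] [Ring A] {n : ℕ}

/-! ### Words and standard monomials -/

/-- The product in `A` of a (not necessarily sorted) word in the variables. -/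
def word (S : SkewPBW R A n) (w : List (Fin n)) : A := (w.map S.x).prod

/-- The composite of the `σ i` along a word. -/
def sigmaWord (S : SkewPBW R A n) (w : List (Fin n)) (r : R) : R := w.foldr (fun i s => S.σ i s) r

/-- The nondecreasing word spelling the standard monomial `x^α`. -/
def stdWord (α : Fin n → ℕ) : List (Fin n) :=
  (List.finRange n).flatMap fun i => List.replicate (α i) i

/-- The left `R`-span of the words of length strictly less than `d`. -/
def lower (S : SkewPBW R A n) (d : ℕ) : AddSubgroup A :=
  AddSubgroup.closure {y | ∃ (r : R) (w : List (Fin n)), w.length < d ∧ y = S.ι r * S.word w}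

/-- The element of `A` with given coefficients on the standard monomials. -/
noncomputable def ofCoeff (S : SkewPBW R A n) : ((Fin n → ℕ) →₀ R) →+ A :=
  Finsupp.liftAddHom fun α => (AddMonoidHom.mulRight (S.mono α)).comp S.ι.toAddMonoidHom

lemma ofCoeff_apply (S : SkewPBW R A n) (c : (Fin n → ℕ) →₀ R) :
    S.ofCoeff c = c.sum fun α r => S.ι r * S.mono α := rfl

lemma ofCoeff_single (S : SkewPBW R A n) (α : Fin n → ℕ) (r : R) :
    S.ofCoeff (Finsupp.single α r) = S.ι r * S.mono α := by
  simp [ofCoeff_apply]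

lemma ofCoeff_bijective (S : SkewPBW R A n) : Function.Bijective S.ofCoeff := S.free

lemma word_cons (S : SkewPBW R A n) (i : Fin n) (w : List (Fin n)) :
    S.word (i :: w) = S.x i * S.word w := by simp [word]

lemma word_append (S : SkewPBW R A n) (v w : List (Fin n)) :
    S.word (v ++ w) = S.word v * S.word w := by simp [word]

lemma word_stdWord (S : SkewPBW R A n) (α : Fin n → ℕ) : S.word (stdWord α) = S.mono α := by
  unfold word stdWord mono
  induction List.finRange n with
  | nil => simp
  | cons i l ih => simp_all

lemma sigmaWord_stdWord (S : SkewPBW R A n) (α : Fin n → ℕ) (r : R) :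
    S.sigmaWord (stdWord α) r = S.sigmaPow α r := by
  unfold sigmaWord stdWord sigmaPow iterPow
  induction List.finRange n with
  | nil => simp
  | cons i l ih =>
    rw [List.flatMap_cons, List.foldr_append, ih]
    simp only [List.map_cons, List.foldr_cons, Function.comp_apply]
    generalize (List.map (fun i => (S.σ i : R → R)^[α i]) l).foldr (· ∘ ·) id r = s
    induction α i with
    | zero => simp
    | succ k ihk => rw [List.replicate_succ, List.foldr_cons, ihk, Function.iterate_succ_apply']

lemma length_stdWord (α : Fin n → ℕ) : (stdWord α).length = ∑ i, α i := by
  simp [stdWord, List.length_flatMap, Fin.sum_univ_def]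

lemma count_stdWord (α : Fin n → ℕ) (i : Fin n) : (stdWord α).count i = α i := by
  have h : (stdWord α).count i = ((List.finRange n).map fun j => if j = i then α j else 0).sum := by
    unfold stdWord
    rw [List.count_flatMap]
    congr 2
    funext j
    simp [List.count_replicate]
  rw [h, ← Fin.sum_univ_def]
  simp

lemma perm_stdWord (w : List (Fin n)) : w.Perm (stdWord fun i => w.count i) :=
  List.perm_iff_count.2 fun i => (count_stdWord (fun i => w.count i) i).symm

lemma pairwise_stdWord (α : Fin n → ℕ) : (stdWord α).Pairwise (· ≤ ·) := by
  unfold stdWord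
  rw [List.pairwise_flatMap]
  refine ⟨fun i _ => by simp [List.pairwise_replicate], ?_⟩
  refine (List.pairwise_lt_finRange n).imp ?_
  intro i j hij a ha b hb
  rw [List.eq_of_mem_replicate ha, List.eq_of_mem_replicate hb]
  exact hij.le

/-! ### The filtration by word length -/

lemma ι_mul_word_mem (S : SkewPBW R A n) (r : R) {w : List (Fin n)} {d : ℕ} (h : w.length < d) :
    S.ι r * S.word w ∈ S.lower d :=
  AddSubgroup.subset_closure ⟨r, w, h, rfl⟩

lemma lower_mono (S : SkewPBW R A n) {d e : ℕ} (h : d ≤ e) : S.lower d ≤ S.lower e :=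
  AddSubgroup.closure_mono fun _ ⟨r, w, hw, hy⟩ => ⟨r, w, hw.trans_le h, hy⟩

lemma ι_mul_mem (S : SkewPBW R A n) (r : R) {d : ℕ} {y : A} (hy : y ∈ S.lower d) :
    S.ι r * y ∈ S.lower d := by
  induction hy using AddSubgroup.closure_induction with
  | mem y h =>
    obtain ⟨s, w, hw, rfl⟩ := h
    rw [← mul_assoc, ← map_mul]
    exact S.ι_mul_word_mem _ hw
  | zero => simp [zero_mem]
  | add y z _ _ hy hz => rw [mul_add]; exact add_mem hy hz
  | neg y _ hy => rw [mul_neg]; exact neg_mem hy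

lemma mul_word_mem (S : SkewPBW R A n) (v : List (Fin n)) {d : ℕ} {y : A} (hy : y ∈ S.lower d) :
    y * S.word v ∈ S.lower (d + v.length) := by
  induction hy using AddSubgroup.closure_induction with
  | mem y h =>
    obtain ⟨s, w, hw, rfl⟩ := h
    rw [mul_assoc, ← word_append]
    exact S.ι_mul_word_mem _ (by simp; omega)
  | zero => simp [zero_mem]
  | add y z _ _ hy hz => rw [add_mul]; exact add_mem hy hz
  | neg y _ hy => rw [neg_mul]; exact neg_mem hy

lemma x_mul_mem (S : SkewPBW R A n) (i : Fin n) {d : ℕ} {y : A} (hy : y ∈ S.lower d) :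
    S.x i * y ∈ S.lower (d + 1) := by
  induction hy using AddSubgroup.closure_induction with
  | mem y h =>
    obtain ⟨s, w, hw, rfl⟩ := h
    rw [← mul_assoc, S.comm, add_mul, mul_assoc, ← word_cons]
    exact add_mem (S.ι_mul_word_mem _ (by simp; omega)) (S.ι_mul_word_mem _ (by omega))
  | zero => simp [zero_mem]
  | add y z _ _ hy hz => rw [mul_add]; exact add_mem hy hz
  | neg y _ hy => rw [mul_neg]; exact neg_mem hy

/-- Modulo shorter words, moving a scalar to the left across a word applies the `σ i`. -/
lemma word_mul_ι (S : SkewPBW R A n) (w : List (Fin n)) (r : R) :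
    S.word w * S.ι r - S.ι (S.sigmaWord w r) * S.word w ∈ S.lower w.length := by
  induction w with
  | nil => simp [word, sigmaWord, zero_mem]
  | cons i w ih =>
    have h1 := S.x_mul_mem i ih
    have h2 : S.ι (S.δ i (S.sigmaWord w r)) * S.word w ∈ S.lower (w.length + 1) :=
      S.ι_mul_word_mem _ (by omega)
    have e : S.word (i :: w) * S.ι r - S.ι (S.sigmaWord (i :: w) r) * S.word (i :: w)
        = S.x i * (S.word w * S.ι r - S.ι (S.sigmaWord w r) * S.word w)
          + S.ι (S.δ i (S.sigmaWord w r)) * S.word w := by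
      have e' : S.sigmaWord (i :: w) r = S.σ i (S.sigmaWord w r) := rfl
      rw [word_cons, e', mul_sub, ← mul_assoc (S.x i) (S.ι _), S.comm]
      noncomm_ring
    rw [e]
    exact add_mem h1 h2

/-- Modulo shorter words, swapping the first two letters of a word costs a factor `c i j`. -/
lemma word_swap_sub_mem (S : SkewPBW R A n) (i j : Fin n) (w : List (Fin n)) :
    S.word (j :: i :: w) - S.ι (S.c i j) * S.word (i :: j :: w) ∈ S.lower (w.length + 2) := by
  obtain ⟨r₀, r, h⟩ := S.quad i j
  have e : S.word (j :: i :: w) - S.ι (S.c i j) * S.word (i :: j :: w)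
      = S.ι r₀ * S.word w + ∑ k, S.ι (r k) * S.word (k :: w) := by
    simp only [word_cons, ← mul_assoc]
    rw [← Finset.sum_mul, ← add_mul, ← h]
    noncomm_ring
  rw [e]
  exact add_mem (S.ι_mul_word_mem _ (by omega))
    (sum_mem fun k _ => S.ι_mul_word_mem _ (by simp))

/-- Permuting the letters of a word multiplies it, modulo shorter words, by a scalar. This scalar
lies in any submonoid that contains the `c i j` and is stable under the `σ i`: with `M = ⊤` this
is unconditional, and with the units it is the sharp version needed for leading coefficients. -/
lemma exists_word_sub_mem_lower (S : SkewPBW R A n) (M : Submonoid R)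
    (hM : ∀ i, ∀ u ∈ M, S.σ i u ∈ M) (hcM : ∀ i j, i ≠ j → S.c i j ∈ M)
    {v w : List (Fin n)} (h : v.Perm w) :
    ∃ u ∈ M, S.word v - S.ι u * S.word w ∈ S.lower v.length := by
  induction h with
  | nil => exact ⟨1, one_mem _, by simp [zero_mem]⟩
  | cons i h ih =>
    rename_i v w
    obtain ⟨u, hu, hm⟩ := ih
    refine ⟨S.σ i u, hM i u hu, ?_⟩
    have e : S.word (i :: v) - S.ι (S.σ i u) * S.word (i :: w)
        = S.x i * (S.word v - S.ι u * S.word w) + S.ι (S.δ i u) * S.word w := by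
      rw [word_cons, word_cons, mul_sub, ← mul_assoc (S.x i) (S.ι _), S.comm]
      noncomm_ring
    rw [e]
    exact add_mem (S.x_mul_mem i hm)
      (S.ι_mul_word_mem _ (by rw [List.length_cons, h.length_eq]; omega))
  | swap i j w =>
    by_cases hij : i = j
    · subst hij
      exact ⟨1, one_mem _, by simp [zero_mem]⟩
    · exact ⟨S.c i j, hcM i j hij, S.word_swap_sub_mem i j w⟩
  | trans h₁ _ ih₁ ih₂ =>
    obtain ⟨u, hu, h⟩ := ih₁
    obtain ⟨u', hu', h'⟩ := ih₂
    refine ⟨u * u', mul_mem hu hu', ?_⟩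
    rw [← h₁.length_eq] at h'
    have := add_mem h (S.ι_mul_mem u h')
    rw [mul_sub, sub_add_sub_cancel, ← mul_assoc, ← map_mul] at this
    exact this

/-- Shorter words are combinations of standard monomials of smaller degree. -/
lemma exists_ofCoeff_eq (S : SkewPBW R A n) (d : ℕ) : ∀ y ∈ S.lower d,
    ∃ c, S.ofCoeff c = y ∧ ∀ β, c β ≠ 0 → ∑ i, β i < d := by
  induction d using Nat.strong_induction_on with
  | _ d ih =>
  intro y hy
  induction hy using AddSubgroup.closure_induction with
  | mem y h =>
    obtain ⟨r, w, hw, rfl⟩ := h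
    obtain ⟨u, -, hu⟩ := S.exists_word_sub_mem_lower ⊤ (by simp) (by simp) (perm_stdWord w)
    obtain ⟨c, hc, hcd⟩ := ih _ hw _ (S.ι_mul_mem r hu)
    refine ⟨c + Finsupp.single (fun i => w.count i) (r * u), ?_, ?_⟩
    · rw [map_add, hc, ofCoeff_single, word_stdWord, map_mul]
      noncomm_ring
    · intro β hβ
      by_cases h : (fun i => w.count i) = β
      · subst h
        rw [← length_stdWord, ← (perm_stdWord w).length_eq]
        exact hw
      · rw [Finsupp.add_apply, Finsupp.single_eq_of_ne (Ne.symm h), add_zero] at hβ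
        exact (hcd β hβ).trans hw
  | zero => exact ⟨0, by simp, by simp⟩
  | add y z _ _ hy hz =>
    obtain ⟨c, rfl, hc⟩ := hy
    obtain ⟨c', rfl, hc'⟩ := hz
    refine ⟨c + c', map_add _ _ _, fun β hβ => ?_⟩
    by_cases h : c β = 0
    · exact hc' β (by simpa [h] using hβ)
    · exact hc β h
  | neg y _ hy =>
    obtain ⟨c, rfl, hc⟩ := hy
    exact ⟨-c, map_neg _ _, fun β hβ => hc β (by simpa using hβ)⟩

/-- A nonzero multiple of a standard monomial is not a combination of shorter words. -/
lemma eq_zero_of_mul_mono_mem (S : SkewPBW R A n) {r : R} {α : Fin n → ℕ}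
    (h : S.ι r * S.mono α ∈ S.lower (∑ i, α i)) : r = 0 := by
  obtain ⟨c, hc, hd⟩ := S.exists_ofCoeff_eq _ _ h
  rw [← ofCoeff_single] at hc
  have hc := S.ofCoeff_bijective.1 hc
  by_contra hr
  exact (hd α (by simpa [hc] using hr)).false

/-! ### Leading coefficients -/

lemma c_mul_c (S : SkewPBW R A n) {i j : Fin n} (hij : i < j) : S.c j i * S.c i j = 1 := by
  have h₁ := S.word_swap_sub_mem j i []
  have h₂ := S.ι_mul_mem (S.c j i) (S.word_swap_sub_mem i j [])
  have h := add_mem h₁ h₂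
  rw [mul_sub, sub_add_sub_cancel, ← mul_assoc, ← map_mul] at h
  -- Since `i < j`, the word `x_i x_j` is itself a standard monomial.
  have hs : stdWord (fun k => [i, j].count k) = [i, j] :=
    (perm_stdWord [i, j]).symm.eq_of_pairwise (fun _ _ _ _ h h' => le_antisymm h h')
      (pairwise_stdWord _) (by simp [hij.le])
  have hl := length_stdWord (fun k => [i, j].count k)
  rw [← hs, word_stdWord] at h
  have h' : S.ι (1 - S.c j i * S.c i j) * S.mono (fun k => [i, j].count k)
      ∈ S.lower (∑ k, [i, j].count k) := by
    rw [← hl, hs, map_sub, map_one, sub_mul, one_mul]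
    exact h
  exact (sub_eq_zero.1 (S.eq_zero_of_mul_mono_mem h')).symm

lemma isUnit_c (S : SkewPBW R A n) (hc : S.CCentral) {i j : Fin n} (hij : i ≠ j) :
    IsUnit (S.c i j) := by
  rcases lt_or_gt_of_ne hij with h | h
  · have := S.c_mul_c h
    exact ⟨⟨_, _, (hc i j _).trans this, this⟩, rfl⟩
  · have := S.c_mul_c h
    exact ⟨⟨_, _, this, (hc j i _).trans this⟩, rfl⟩

/-- Products of terms detect products of coefficients: the leading coefficient of
`a x^α · b x^β` is `a σ^α(b)` times a unit. -/
lemma mul_eq_zero_of_terms (S : SkewPBW R A n) (hc : S.CCentral) (hSig : S.SigmaCompatible)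
    {a b : R} {α β : Fin n → ℕ} (h : S.ι a * S.mono α * (S.ι b * S.mono β) = 0) : a * b = 0 := by
  set p := stdWord α
  set q := stdWord β
  have hp : S.mono α = S.word p := (S.word_stdWord α).symm
  have hq : S.mono β = S.word q := (S.word_stdWord β).symm
  rw [hp, hq] at h
  obtain ⟨u, hu, hm⟩ := S.exists_word_sub_mem_lower (IsUnit.submonoid R)
    (fun i u hu => IsUnit.map (S.σ i) hu) (fun i j hij => S.isUnit_c hc hij) (perm_stdWord (p ++ q))
  have h₁ := S.mul_word_mem q (S.ι_mul_mem a (S.word_mul_ι p b))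
  rw [← List.length_append] at h₁
  have h₂ := S.ι_mul_mem (a * S.sigmaWord p b) hm
  have h₃ := neg_mem (add_mem h₁ h₂)
  have e : -(S.ι a * (S.word p * S.ι b - S.ι (S.sigmaWord p b) * S.word p) * S.word q
      + S.ι (a * S.sigmaWord p b) * (S.word (p ++ q)
        - S.ι u * S.word (stdWord fun i => (p ++ q).count i)))
      = S.ι (a * S.sigmaWord p b * u) * S.mono (fun i => (p ++ q).count i)
        - S.ι a * S.word p * (S.ι b * S.word q) := by
    rw [← word_stdWord S fun i => (p ++ q).count i, word_append]
    simp only [map_mul]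
    noncomm_ring
  rw [e, h, sub_zero, (perm_stdWord (p ++ q)).length_eq, length_stdWord] at h₃
  have h₄ : a * S.sigmaWord p b = 0 := (IsUnit.mul_left_eq_zero hu).1 (S.eq_zero_of_mul_mono_mem h₃)
  rw [sigmaWord_stdWord] at h₄
  exact (hSig a b α).1 h₄

/-- One left factor `f` of a vanishing product may be replaced by any of its coefficients. -/
lemma coeff_mul_eq_zero (S : SkewPBW R A n) (hc : S.CCentral) (hSig : S.SigmaCompatible)
    (hArm : S.SDSkewArmendariz) {m : ℕ} (a : Fin (m + 1) → R) (X : Fin (m + 1) → Fin n → ℕ)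
    (hX : Function.Injective X) (r : R) (y : A)
    (h : S.ι r * ((∑ i, S.ι (a i) * S.mono (X i)) * y) = 0) (i : Fin (m + 1)) :
    S.ι (r * a i) * y = 0 := by
  classical
  obtain ⟨c, rfl⟩ := S.ofCoeff_bijective.2 y
  -- Adding a possibly zero constant term makes the index set of `y` nonempty.
  set T : Finset (Fin n → ℕ) := insert 0 c.support with hT
  obtain ⟨s, hs⟩ : ∃ s, T.card = s + 1 := ⟨T.card - 1, by
    have : 0 < T.card := Finset.card_pos.2 ⟨0, Finset.mem_insert_self _ _⟩
    omega⟩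
  let e := T.equivFinOfCardEq hs
  let Y : Fin (s + 1) → Fin n → ℕ := fun j => (e.symm j : Fin n → ℕ)
  have hY : Function.Injective Y := Subtype.val_injective.comp e.symm.injective
  have hy : S.ofCoeff c = ∑ j, S.ι (c (Y j)) * S.mono (Y j) := by
    rw [ofCoeff_apply, Finsupp.sum_of_support_subset c (Finset.subset_insert 0 _) _ (by simp),
      ← Finset.sum_coe_sort]
    exact (Equiv.sum_comp e.symm fun t : T => S.ι (c t) * S.mono (t : Fin n → ℕ)).symm
  rw [hy] at h ⊢
  have h0 : (∑ i, S.ι (r * a i) * S.mono (X i)) * (∑ j, S.ι (c (Y j)) * S.mono (Y j)) = 0 := by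
    rw [← h, ← mul_assoc (S.ι r), Finset.mul_sum (f := fun i => S.ι (a i) * S.mono (X i))]
    simp only [map_mul, mul_assoc]
  rw [Finset.mul_sum]
  refine Finset.sum_eq_zero fun j _ => ?_
  have := S.mul_eq_zero_of_terms hc hSig
    (hArm m s (fun i => r * a i) X (fun j => c (Y j)) Y hX hY h0 i j)
  rw [← mul_assoc, ← map_mul, this, map_zero, zero_mul]

end SkewPBW

/-- Let `A` be a skew PBW extension of `R` with the constants `c_{i,j}`
of condition (iv) central in `R`.  If `R` is `Σ`-compatible and `(Σ,Δ)`-skew Armendariz,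
then `R` is skew `Π`-Armendariz with respect to `A`. -/
theorem sdSkewArmendariz_skewPiArmendariz {R A : Type*} [Ring R] [Ring A] {n : ℕ}
    (S : SkewPBW R A n) (hc : S.CCentral)
    (hSig : S.SigmaCompatible) (hArm : S.SDSkewArmendariz) :
    S.SkewPiArmendariz := by
  intro m t a X b Y hX hY ⟨k, hk⟩ i j
  refine ⟨k, ?_⟩
  set f := ∑ i, S.ι (a i) * S.mono (X i) with hf
  set g := ∑ j, S.ι (b j) * S.mono (Y j) with hg
  -- The scalar `r` accumulates the factors already stripped.
  have key : ∀ (k : ℕ) (r : R), S.ι r * (f * g) ^ k = 0 → r * (a i * b j) ^ k = 0 := by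
    intro k
    induction k with
    | zero =>
      intro r h
      exact S.ι_inj (by simpa using h)
    | succ k ih =>
      intro r h
      rw [pow_succ', mul_assoc f g] at h
      have h₁ := S.coeff_mul_eq_zero hc hSig hArm a X hX r _ h i
      have h₂ := ih _ (S.coeff_mul_eq_zero hc hSig hArm b Y hY _ _ h₁ j)
      rw [pow_succ', ← mul_assoc, ← mul_assoc r]
      exact h₂
  simpa using key k 1 (by simpa using hk)
end

section
/- Let A = σ(R)⟨x_1,…,x_n⟩ be a skew PBW extension of a ring R with the elements c_{i,j} of condition (iv) central in R. If R is (Σ,Δ)-compatible and reversible, then R is skew Π-Armendariz with respect to A; that is, for all f = a_0 + a_1X_1 + ⋯ + a_mX_m and g = b_0 + b_1Y_1 + ⋯ + b_tY_t in A with fg nilpotent in A, the product a_i b_j is nilpotent in R for all 0 ≤ i ≤ m and 0 ≤ j ≤ t. -/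
/-!
The nilpotent elements of `R` are controlled by completely prime ideals. In a reversible ring,
every non-nilpotent `d` lies outside some completely prime ideal `P` that is minimal, in the sense
that each `x ∈ P` has `s * x` nilpotent for some `s ∉ P`
(`IsReversible.exists_minimal_prime`). Reversibility lets compatibility be applied inside nilpotent
products, so `s * x` nilpotent forces `s * σᵢ x` and `s * δᵢ x` to be nilpotent, and conversely for
`σᵢ`. Hence `σᵢ⁻¹(P) = P` and `δᵢ(P) ⊆ P` (`SkewPBW.exists_stablePrime`).

For such a `P`, the elements of `A` with all coefficients in `P` behave like a completely prime
ideal (`SkewPBW.StablePrime.mul_notMem`): up to terms of lower total degree, `x^α r x^β` equals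
`e x^(α + β)` with `e ∈ P` exactly when `r ∈ P`, so comparing degree-lexicographic leading terms
modulo `P` works as over a domain. This uses that the central constants `c_{i,j}`, `i < j`, are
units, which follows from the freeness of `A` over `R`.

If `aᵢ bⱼ` were not nilpotent, some such `P` would contain neither `aᵢ` nor `bⱼ`. Then neither `f`
nor `g` has all its coefficients in `P`, the same holds for every power of `f g`, and `f g` is not
nilpotent.
-/

open scoped BigOperators

/-! ### Nilpotent elements and minimal primes of reversible rings -/

section Reversible

variable {R : Type*} [Ring R]

/-- Reversible rings are semicommutative: a factor may be inserted into a zero product. -/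
theorem IsReversible.insert (h : IsReversible R) {u v : R} (r : R) (huv : u * v = 0) :
    u * r * v = 0 := by
  have h1 : v * (u * r) = 0 := by rw [← mul_assoc, h u v huv, zero_mul]
  exact h _ _ h1

/-- If every zero product stays zero when a factor `a` is replaced by `a'`, then `a'` is
nilpotent as soon as `a` is: the factors of `a ^ k = 0` are replaced one at a time. -/
theorem nil_subst {a a' : R} (h : ∀ u v : R, u * a * v = 0 → u * a' * v = 0)
    (ha : IsNilpotent a) : IsNilpotent a' := by
  obtain ⟨k, hk⟩ := ha
  have key : ∀ j i : ℕ, a ^ (j + i) = 0 → a' ^ j * a ^ i = 0 := by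
    intro j
    induction j with
    | zero => intro i hi; simpa using hi
    | succ j ih =>
      intro i hi
      rw [pow_succ]
      apply h
      rw [mul_assoc, ← pow_succ']
      exact ih (i + 1) (by rw [← hi]; congr 1; omega)
  exact ⟨k, by simpa using key k 0 hk⟩

theorem nil_swap {u v : R} (h : IsNilpotent (u * v)) : IsNilpotent (v * u) := by
  obtain ⟨k, hk⟩ := h
  refine ⟨k + 1, ?_⟩
  have : ∀ j : ℕ, (v * u) ^ (j + 1) = v * (u * v) ^ j * u := by
    intro j
    induction j with
    | zero => simp
    | succ j ih => rw [pow_succ, ih, pow_succ]; simp only [mul_assoc]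
  rw [this, hk, mul_zero, zero_mul]

theorem nil_of_sq {a : R} (h : IsNilpotent (a * a)) : IsNilpotent a := by
  obtain ⟨k, hk⟩ := h
  exact ⟨2 * k, by rw [pow_mul, pow_two]; exact hk⟩

theorem IsReversible.nil_mul_left (h : IsReversible R) {a : R} (r : R) (ha : IsNilpotent a) :
    IsNilpotent (r * a) := by
  refine nil_subst (fun u v huv => ?_) ha
  rw [mul_assoc] at huv
  rw [← mul_assoc, mul_assoc (u * r)]
  exact h.insert r huv

theorem IsReversible.nil_mul_right (h : IsReversible R) {a : R} (r : R) (ha : IsNilpotent a) :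
    IsNilpotent (a * r) :=
  nil_swap (h.nil_mul_left r ha)

theorem IsReversible.nil_insert (h : IsReversible R) {u v : R} (r : R)
    (huv : IsNilpotent (u * v)) : IsNilpotent (u * r * v) := by
  have : IsNilpotent (r * (v * u)) := h.nil_mul_left r (nil_swap huv)
  rw [← mul_assoc] at this
  simpa only [mul_assoc] using nil_swap this

/-- In a reversible ring the sum of two nilpotent elements `a`, `b` is nilpotent.  With
`z = a + b`, an equation `z ^ M * a ^ (j + 1) = 0` yields `z ^ (M + m) * a ^ j = 0`, because every
word of `z ^ m` other than `b ^ m = 0` contains a factor `a`. -/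
theorem IsReversible.nil_add (h : IsReversible R) {a b : R} (ha : IsNilpotent a)
    (hb : IsNilpotent b) : IsNilpotent (a + b) := by
  obtain ⟨k, hk⟩ := ha
  obtain ⟨m, hm⟩ := hb
  have step : ∀ (p : ℕ) (u v : R), u * a * v = 0 →
      u * (a + b) ^ p * v = u * b ^ p * v := by
    intro p
    induction p with
    | zero => intro u v _; simp
    | succ p ih =>
      intro u v huv
      have e1 : u * (a + b) ^ p * (a * v) = 0 := h.insert _ (by rw [← mul_assoc]; exact huv)
      have e2 : u * a * (b * v) = 0 := by rw [← mul_assoc]; exact h.insert b huv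
      have e3 := ih u (b * v) e2
      calc u * (a + b) ^ (p + 1) * v
          = u * (a + b) ^ p * (a * v) + u * (a + b) ^ p * (b * v) := by
            rw [pow_succ]; noncomm_ring
        _ = u * b ^ (p + 1) * v := by rw [e1, e3, pow_succ, zero_add]; simp only [mul_assoc]
  have down : ∀ j : ℕ, (∃ M, (a + b) ^ M * a ^ j = 0) → IsNilpotent (a + b) := by
    intro j
    induction j with
    | zero => rintro ⟨M, hM⟩; exact ⟨M, by simpa using hM⟩
    | succ j ih =>
      rintro ⟨M, hM⟩
      refine ih ⟨M + m, ?_⟩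
      rw [pow_add, step m _ _ (by rw [mul_assoc, ← pow_succ']; exact hM), hm, mul_zero, zero_mul]
  exact down k ⟨0, by simp [hk]⟩

/-- In a reversible ring, every non-nilpotent `d` is avoided by a proper two-sided completely
prime ideal `P` that is minimal, in the form: each `x ∈ P` satisfies `s * x` nilpotent for
some `s ∉ P`.  Its complement is a maximal multiplicative set without nilpotent elements. -/
theorem IsReversible.exists_minimal_prime (h : IsReversible R) {d : R} (hd : ¬ IsNilpotent d) :
    ∃ P : Ideal R, d ∉ P ∧ (1 : R) ∉ P ∧ (∀ x r, x ∈ P → x * r ∈ P) ∧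
      (∀ x y, x * y ∈ P → x ∈ P ∨ y ∈ P) ∧ ∀ x ∈ P, ∃ s, s ∉ P ∧ IsNilpotent (s * x) := by
  obtain ⟨M, hdM, hmax⟩ := zorn_le_nonempty₀ {M : Submonoid R | ∀ x ∈ M, ¬ IsNilpotent x}
    (fun c hc hchain y hy => ⟨sSup c, by
      intro x hx
      rw [Submonoid.mem_sSup_of_directedOn ⟨y, hy⟩ hchain.directedOn] at hx
      obtain ⟨s, hs, hxs⟩ := hx
      exact hc hs x hxs, fun s hs => le_sSup hs⟩)
    (Submonoid.powers d) (by
      rintro x ⟨k, rfl⟩ ⟨m, hm⟩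
      exact hd ⟨k * m, by rw [pow_mul]; exact hm⟩)
  have hM : ∀ x ∈ M, ¬ IsNilpotent x := hmax.prop
  have hout : ∀ x ∉ M, ∃ s ∈ M, IsNilpotent (s * x) := by
    intro x hx
    by_contra! hcon
    -- a multiplicative set containing `M` and `x`, free of nilpotents by `hcon`
    let T : Submonoid R :=
      { carrier := {y | ∃ s ∈ M, ∀ z, IsNilpotent (y * z) → IsNilpotent (s * x * z)}
        one_mem' := ⟨1, M.one_mem, fun z hz => by
          rw [one_mul] at hz
          exact h.nil_mul_left _ hz⟩
        mul_mem' := by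
          rintro y₁ y₂ ⟨s₁, hs₁, h₁⟩ ⟨s₂, hs₂, h₂⟩
          refine ⟨s₁ * s₂, M.mul_mem hs₁ hs₂, fun z hz => ?_⟩
          rw [mul_assoc] at hz
          have e1 := (h₁ _ hz)
          have e2 : IsNilpotent (y₂ * (z * (s₁ * x))) := by
            have := nil_swap (u := s₁ * x) (v := y₂ * z) e1
            simpa only [mul_assoc] using this
          have e3 := h₂ _ e2
          have e4 : IsNilpotent ((s₂ * x * z * s₁) * x) := by simpa only [mul_assoc] using e3
          have e5 := h.nil_mul_right z (h.nil_mul_left s₁ (h.nil_insert s₂ e4))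
          exact nil_of_sq (a := s₁ * s₂ * x * z) (by simpa only [mul_assoc] using e5) }
    have hMT : M ≤ T := fun s hs => ⟨s, hs, fun z hz => h.nil_insert x hz⟩
    have hT : T ≤ M := by
      refine hmax.2 (fun y hy hnil => ?_) hMT
      obtain ⟨s, hs, hy⟩ := hy
      exact hcon s hs (by simpa using hy 1 (by simpa using hnil))
    exact hx (hT ⟨1, M.one_mem, fun z hz => by simpa using hz⟩)
  have hin : ∀ s ∈ M, ∀ x, IsNilpotent (s * x) → x ∉ M := fun s hs x hn hx =>
    hM _ (M.mul_mem hs hx) hn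
  refine ⟨{ carrier := {x | x ∉ M}, add_mem' := ?_, zero_mem' := ?_, smul_mem' := ?_ },
    ?_, ?_, ?_, ?_, ?_⟩
  · intro x y hx hy
    obtain ⟨s, hs, hsx⟩ := hout x hx
    obtain ⟨t, ht, hty⟩ := hout y hy
    refine hin (s * t) (M.mul_mem hs ht) _ ?_
    rw [mul_add]
    refine h.nil_add (h.nil_insert t hsx) ?_
    rw [mul_assoc]
    exact h.nil_mul_left s hty
  · exact fun h0 => hM 0 h0 IsNilpotent.zero
  · intro r x hx
    obtain ⟨s, hs, hsx⟩ := hout x hx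
    refine hin s hs _ ?_
    rw [smul_eq_mul, ← mul_assoc]
    exact h.nil_insert r hsx
  · exact fun hd' => hd' (hdM ⟨1, pow_one d⟩)
  · exact fun h1 => h1 M.one_mem
  · intro x r hx
    obtain ⟨s, hs, hsx⟩ := hout x hx
    refine hin s hs _ ?_
    rw [← mul_assoc]
    exact h.nil_mul_right r hsx
  · intro x y hxy
    by_contra! hcon
    exact hxy (M.mul_mem (not_not.1 hcon.1) (not_not.1 hcon.2))
  · intro x hx
    obtain ⟨s, hs, hsx⟩ := hout x hx
    exact ⟨s, not_not.2 hs, hsx⟩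

end Reversible

/-! ### Coefficients with respect to the standard monomials -/

namespace SkewPBW

variable {R A : Type*} [Ring R] [Ring A] {n : ℕ}

/-- The additive isomorphism sending a finitely supported family `c` to `∑ α, c α x^α`. -/
noncomputable def comb (S : SkewPBW R A n) : ((Fin n → ℕ) →₀ R) ≃+ A :=
  AddEquiv.ofBijective
    (Finsupp.liftAddHom fun α => (AddMonoidHom.mulRight (S.mono α)).comp S.ι.toAddMonoidHom)
    S.free

/-- The coefficient of the standard monomial `x^γ` in an element of `A`. -/
noncomputable def coef (S : SkewPBW R A n) (γ : Fin n → ℕ) : A →+ R :=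
  (Finsupp.applyAddHom γ).comp S.comb.symm.toAddMonoidHom

theorem comb_apply (S : SkewPBW R A n) (c : (Fin n → ℕ) →₀ R) :
    S.comb c = c.sum fun α r => S.ι r * S.mono α := rfl

theorem comb_single (S : SkewPBW R A n) (α : Fin n → ℕ) (r : R) :
    S.comb (Finsupp.single α r) = S.ι r * S.mono α := by
  rw [comb_apply, Finsupp.sum_single_index]
  simp

theorem coef_term (S : SkewPBW R A n) (γ α : Fin n → ℕ) (r : R) :
    S.coef γ (S.ι r * S.mono α) = if α = γ then r else 0 := by
  rw [← comb_single]
  change (S.comb.symm (S.comb _)) γ = _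
  rw [AddEquiv.symm_apply_apply, Finsupp.single_apply]

theorem expand (S : SkewPBW R A n) (h : A) :
    h = ∑ α ∈ (S.comb.symm h).support, S.ι (S.coef α h) * S.mono α := by
  conv_lhs => rw [← S.comb.apply_symm_apply h, comb_apply]
  rfl

theorem coef_smul (S : SkewPBW R A n) (γ : Fin n → ℕ) (r : R) (h : A) :
    S.coef γ (S.ι r * h) = r * S.coef γ h := by
  have h1 : S.ι r * h = ∑ α ∈ (S.comb.symm h).support, S.ι (r * S.coef α h) * S.mono α := by
    conv_lhs => rw [S.expand h]
    rw [Finset.mul_sum]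
    simp only [map_mul, mul_assoc]
  have h2 := congrArg (S.coef γ) (S.expand h)
  rw [h1, map_sum]
  rw [map_sum] at h2
  rw [h2, Finset.mul_sum]
  simp only [coef_term, mul_ite, mul_zero]

/-! ### The filtration by total degree -/

/-- The total degree of an exponent. -/
def deg (γ : Fin n → ℕ) : ℕ := ∑ i, γ i

theorem deg_add (α β : Fin n → ℕ) : deg (α + β) = deg α + deg β :=
  Finset.sum_add_distrib

theorem deg_single (i : Fin n) : deg (Pi.single i 1 : Fin n → ℕ) = 1 := by
  simp [deg]

/-- The left `R`-submodule of `A` spanned by the standard monomials of degree less than `d`. -/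
noncomputable def filt (S : SkewPBW R A n) (d : ℕ) : AddSubgroup A where
  carrier := {h | ∀ γ, d ≤ deg γ → S.coef γ h = 0}
  add_mem' ha hb γ hγ := by rw [map_add, ha γ hγ, hb γ hγ, add_zero]
  zero_mem' γ _ := map_zero _
  neg_mem' ha γ hγ := by rw [map_neg, ha γ hγ, neg_zero]

theorem filt_mono (S : SkewPBW R A n) {d e : ℕ} (hde : d ≤ e) : S.filt d ≤ S.filt e :=
  fun _ hh γ hγ => hh γ (hde.trans hγ)

theorem smul_mem_filt (S : SkewPBW R A n) {d : ℕ} (r : R) {h : A} (hh : h ∈ S.filt d) :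
    S.ι r * h ∈ S.filt d := fun γ hγ => by rw [coef_smul, hh γ hγ, mul_zero]

theorem mono_mem_filt (S : SkewPBW R A n) {d : ℕ} {γ : Fin n → ℕ} (h : deg γ < d) :
    S.mono γ ∈ S.filt d := fun δ hδ => by
  have := S.coef_term δ γ 1
  rw [map_one, one_mul] at this
  rw [this, if_neg]
  rintro rfl
  omega

/-- An additive subgroup contains `y * h` for `h ∈ filt d` once it contains the products
of `y` with the terms of degree less than `d`. -/
theorem mul_mem_of_filt (S : SkewPBW R A n) {d : ℕ} {h : A} (hh : h ∈ S.filt d) (y : A)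
    (G : AddSubgroup A) (H : ∀ r γ, deg γ < d → y * (S.ι r * S.mono γ) ∈ G) : y * h ∈ G := by
  rw [S.expand h, Finset.mul_sum]
  refine G.sum_mem fun γ _ => ?_
  by_cases hγ : deg γ < d
  · exact H _ _ hγ
  · rw [hh γ (not_lt.1 hγ), map_zero, zero_mul, mul_zero]
    exact G.zero_mem

/-! ### Multiplication of standard monomials -/

theorem x_mul_list (x : Fin n → A) (γ : Fin n → ℕ) (j : Fin n) (l : List (Fin n))
    (hl : l.Pairwise (· < ·)) (hj : j ∈ l) (h0 : ∀ k < j, γ k = 0) :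
    x j * (l.map fun i => x i ^ γ i).prod =
      (l.map fun i => x i ^ (γ + Pi.single j 1 : Fin n → ℕ) i).prod := by
  induction l with
  | nil => simp at hj
  | cons a l ih =>
    rw [List.pairwise_cons] at hl
    by_cases haj : a = j
    · subst haj
      have : ∀ i ∈ l, x i ^ γ i = x i ^ (γ + Pi.single a 1 : Fin n → ℕ) i := fun i hi => by
        have : i ≠ a := (hl.1 i hi).ne'
        simp [this]
      rw [List.map_cons, List.map_cons, List.prod_cons, List.prod_cons, ← List.map_congr_left this]
      simp [pow_succ', mul_assoc]
    · have hjl : j ∈ l := (List.mem_cons.1 hj).resolve_left (Ne.symm haj)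
      have ha : γ a = 0 := h0 a (hl.1 j hjl)
      simp only [List.map_cons, List.prod_cons]
      rw [← ih hl.2 hjl]
      simp [haj, ha]

theorem x_mul_mono (S : SkewPBW R A n) (γ : Fin n → ℕ) (j : Fin n) (h0 : ∀ k < j, γ k = 0) :
    S.x j * S.mono γ = S.mono (γ + Pi.single j 1) :=
  x_mul_list S.x γ j _ (List.pairwise_lt_finRange n) (List.mem_finRange j) h0

theorem mono_zero (S : SkewPBW R A n) : S.mono 0 = 1 := by
  simp [mono]

/-- A nonzero exponent is `γ' + eⱼ` with `j` its least index. -/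
theorem exists_decomp {γ : Fin n → ℕ} (h : γ ≠ 0) :
    ∃ (j : Fin n) (γ' : Fin n → ℕ), (∀ k < j, γ k = 0) ∧
      (∀ k < j, γ' k = 0) ∧ γ = γ' + Pi.single j 1 := by
  have hne : (Finset.univ.filter fun i => γ i ≠ 0).Nonempty := by
    obtain ⟨i, hi⟩ := Function.ne_iff.1 h
    exact ⟨i, by simpa using hi⟩
  set j := (Finset.univ.filter fun i => γ i ≠ 0).min' hne with hj
  have hjm : γ j ≠ 0 := (Finset.mem_filter.1 (Finset.min'_mem _ hne)).2
  have hlt : ∀ k < j, γ k = 0 := fun k hk => by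
    by_contra hk0
    exact absurd (Finset.min'_le _ k (by simpa using hk0)) (not_le.2 hk)
  refine ⟨j, γ - Pi.single j 1, hlt, fun k hk => by simp [hlt k hk], ?_⟩
  ext k
  by_cases hk : k = j
  · subst hk
    simp only [Pi.add_apply, Pi.sub_apply, Pi.single_eq_same]
    omega
  · simp [hk]

/-- The constants `c_{i,j}` with `i < j` are units: rewriting `xᵢ xⱼ` as a multiple of `xⱼ xᵢ`
and back, up to linear terms, gives `(1 - c_{j,i} c_{i,j}) xᵢ xⱼ = 0` modulo linear terms. -/
theorem c_isUnit (S : SkewPBW R A n) (hc : S.CCentral) {i j : Fin n} (hij : i < j) :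
    IsUnit (S.c i j) := by
  have hlin : ∀ (r₀ : R) (r : Fin n → R), S.ι r₀ + ∑ k, S.ι (r k) * S.x k ∈ S.filt 2 := by
    intro r₀ r
    refine add_mem ?_ (sum_mem fun k _ => smul_mem_filt _ _ ?_)
    · have := S.smul_mem_filt r₀ (S.mono_mem_filt (γ := 0) (d := 2) (by simp [deg]))
      rwa [mono_zero, mul_one] at this
    · have := S.x_mul_mono 0 k (by simp)
      rw [mono_zero, mul_one] at this
      rw [this]
      exact S.mono_mem_filt (by simp [deg_single])
  have hm : S.x i * S.x j = S.mono (Pi.single j 1 + Pi.single i 1) := by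
    rw [← x_mul_mono _ _ _ (fun k hk => Pi.single_eq_of_ne (hk.trans hij).ne _)]
    have := S.x_mul_mono 0 j (by simp)
    rw [mono_zero, mul_one, zero_add] at this
    rw [this]
  obtain ⟨a₀, a, ha⟩ := S.quad i j
  obtain ⟨b₀, b, hb⟩ := S.quad j i
  have h1 := S.smul_mem_filt (S.c j i) (hlin a₀ a)
  have h2 := add_mem h1 (hlin b₀ b)
  have h3 : S.ι (1 - S.c j i * S.c i j) * S.mono (Pi.single j 1 + Pi.single i 1) ∈ S.filt 2 := by
    rw [← hm]
    convert h2 using 1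
    rw [← ha, ← hb, map_sub, map_one, map_mul]
    noncomm_ring
  have h4 := h3 (Pi.single j 1 + Pi.single i 1) (by rw [deg_add, deg_single, deg_single])
  rw [coef_term, if_pos rfl, sub_eq_zero] at h4
  exact ⟨⟨_, _, by rw [hc, ← h4], h4.symm⟩, rfl⟩

/-- Left multiplication of a standard monomial by a variable: up to terms of lower total degree,
`xᵢ x^γ` is a unit multiple of `x^(γ + eᵢ)`. -/
theorem x_mul_mono_mod (S : SkewPBW R A n) (hc : S.CCentral) (i : Fin n) (γ : Fin n → ℕ) :
    ∃ u : R, IsUnit u ∧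
      S.x i * S.mono γ - S.ι u * S.mono (γ + Pi.single i 1) ∈ S.filt (deg γ + 1) := by
  induction hd : deg γ using Nat.strong_induction_on generalizing i γ with
  | _ d ih =>
  by_cases hlow : ∀ k < i, γ k = 0
  · refine ⟨1, isUnit_one, ?_⟩
    rw [x_mul_mono _ _ _ hlow, map_one, one_mul, sub_self]
    exact zero_mem _
  · have hγ : γ ≠ 0 := by rintro rfl; simp at hlow
    obtain ⟨j, γ', hj, hj', rfl⟩ := exists_decomp hγ
    have hji : j < i := by
      by_contra hcon
      exact hlow fun k hk => hj k (hk.trans_le (not_lt.1 hcon))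
    rw [deg_add, deg_single] at hd
    have hx : ∀ (k : Fin n) (δ : Fin n → ℕ), deg δ < d → S.x k * S.mono δ ∈ S.filt (d + 1) := by
      intro k δ hδ
      obtain ⟨u, -, hu⟩ := ih _ hδ k δ rfl
      have h1 : S.ι u * S.mono (δ + Pi.single k 1) ∈ S.filt (d + 1) :=
        S.smul_mem_filt _ (S.mono_mem_filt (by rw [deg_add, deg_single]; omega))
      have := add_mem (S.filt_mono (by omega) hu) h1
      rwa [sub_add_cancel] at this
    obtain ⟨u, hu, hmem⟩ := ih (deg γ') (by omega) i γ' rfl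
    obtain ⟨r₀, r, hr⟩ := S.quad j i
    set E := S.x i * S.mono γ' - S.ι u * S.mono (γ' + Pi.single i 1) with hE
    have hxE : S.x j * E ∈ S.filt (d + 1) := by
      refine S.mul_mem_of_filt hmem _ _ fun s δ hδ => ?_
      rw [← mul_assoc, S.comm, add_mul, mul_assoc]
      exact add_mem (S.smul_mem_filt _ (hx _ _ (by omega)))
        (S.smul_mem_filt _ (S.mono_mem_filt (by omega)))
    have hlin : (S.ι r₀ + ∑ k, S.ι (r k) * S.x k) * S.mono γ' ∈ S.filt (d + 1) := by
      rw [add_mul, Finset.sum_mul]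
      refine add_mem (S.smul_mem_filt _ (S.mono_mem_filt (by omega))) (sum_mem fun k _ => ?_)
      rw [mul_assoc]
      exact S.smul_mem_filt _ (hx _ _ (by omega))
    have htop : S.x j * S.mono (γ' + Pi.single i 1) =
        S.mono (γ' + Pi.single j 1 + Pi.single i 1) := by
      rw [x_mul_mono, add_right_comm]
      intro k hk
      simp [hj' k hk, (hk.trans hji).ne]
    refine ⟨S.c j i * S.σ j u, (S.c_isUnit hc hji).mul (hu.map _), ?_⟩
    have hδ : S.ι (S.δ j u) * S.mono (γ' + Pi.single i 1) ∈ S.filt (d + 1) :=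
      S.smul_mem_filt _ (S.mono_mem_filt (by rw [deg_add, deg_single]; omega))
    convert add_mem hlin (S.smul_mem_filt (S.c j i) (add_mem hxE hδ)) using 1
    have hcomm := S.comm j u
    rw [← x_mul_mono _ _ _ hj', ← htop, ← hr, hE, map_mul]
    calc _ = (S.x i * S.x j - S.ι (S.c j i) * (S.x j * S.x i)) * S.mono γ'
          + S.ι (S.c j i) * (S.x j * (S.x i * S.mono γ')
            - (S.ι (S.σ j u) * S.x j + S.ι (S.δ j u)) * S.mono (γ' + Pi.single i 1)
            + S.ι (S.δ j u) * S.mono (γ' + Pi.single i 1)) := by noncomm_ring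
      _ = _ := by rw [← hcomm]; noncomm_ring

theorem x_mul_term_mod (S : SkewPBW R A n) (hc : S.CCentral) (i : Fin n) (r : R)
    (γ : Fin n → ℕ) : ∃ u : R, IsUnit u ∧
      S.x i * (S.ι r * S.mono γ) - S.ι (S.σ i r * u) * S.mono (γ + Pi.single i 1) ∈
        S.filt (deg γ + 1) := by
  obtain ⟨u, hu, hmem⟩ := S.x_mul_mono_mod hc i γ
  refine ⟨u, hu, ?_⟩
  have h1 : S.ι (S.δ i r) * S.mono γ ∈ S.filt (deg γ + 1) :=
    S.smul_mem_filt _ (S.mono_mem_filt (Nat.lt_succ_self _))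
  convert add_mem (S.smul_mem_filt (S.σ i r) hmem) h1 using 1
  rw [← mul_assoc, S.comm, map_mul]
  noncomm_ring

theorem x_mul_mem_filt (S : SkewPBW R A n) (hc : S.CCentral) (i : Fin n) {d : ℕ} {h : A}
    (hh : h ∈ S.filt d) : S.x i * h ∈ S.filt (d + 1) := by
  refine S.mul_mem_of_filt hh _ _ fun r γ hγ => ?_
  obtain ⟨u, -, hmem⟩ := S.x_mul_term_mod hc i r γ
  have h1 : S.ι (S.σ i r * u) * S.mono (γ + Pi.single i 1) ∈ S.filt (d + 1) :=
    S.smul_mem_filt _ (S.mono_mem_filt (by rw [deg_add, deg_single]; omega))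
  have := add_mem (S.filt_mono (by omega) hmem) h1
  rwa [sub_add_cancel] at this

/-! ### Invariant completely prime ideals -/

/-- A proper two-sided completely prime ideal `P` of `R` with `σᵢ⁻¹(P) = P` and `δᵢ(P) ⊆ P`
for all `i`. -/
structure StablePrime (S : SkewPBW R A n) (P : Ideal R) : Prop where
  one_notMem : (1 : R) ∉ P
  mul_right : ∀ x r, x ∈ P → x * r ∈ P
  prime : ∀ x y, x * y ∈ P → x ∈ P ∨ y ∈ P
  sigma : ∀ i x, S.σ i x ∈ P ↔ x ∈ P
  delta : ∀ i x, x ∈ P → S.δ i x ∈ P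

theorem StablePrime.mul_unit {S : SkewPBW R A n} {P : Ideal R} (hP : S.StablePrime P) {u : R}
    (hu : IsUnit u) (x : R) : x * u ∈ P ↔ x ∈ P := by
  refine ⟨fun h => ?_, hP.mul_right _ _⟩
  obtain ⟨v, rfl⟩ := hu
  simpa using hP.mul_right _ (↑v⁻¹ : R) h

/-- Up to terms of lower total degree, `x^α r x^β` is `e x^(α + β)` with `e ∈ P` exactly
when `r ∈ P`. -/
theorem StablePrime.mono_mul_mod {S : SkewPBW R A n} {P : Ideal R} (hP : S.StablePrime P)
    (hc : S.CCentral) (r : R) (α β : Fin n → ℕ) : ∃ e : R, (e ∈ P ↔ r ∈ P) ∧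
      S.mono α * (S.ι r * S.mono β) - S.ι e * S.mono (α + β) ∈ S.filt (deg (α + β)) := by
  induction hd : deg α generalizing α with
  | zero =>
    have : α = 0 := by
      ext i
      simpa using Finset.sum_eq_zero_iff.1 hd i (Finset.mem_univ i)
    subst this
    refine ⟨r, Iff.rfl, ?_⟩
    rw [mono_zero, one_mul, zero_add, sub_self]
    exact zero_mem _
  | succ d ih =>
    obtain ⟨j, α', -, hj, rfl⟩ := exists_decomp (γ := α) (by rintro rfl; simp [deg] at hd)
    rw [deg_add, deg_single] at hd
    obtain ⟨e, he, hmem⟩ := ih α' (by omega)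
    obtain ⟨u, hu, hmem'⟩ := S.x_mul_term_mod hc j e (α' + β)
    refine ⟨S.σ j e * u, by rw [hP.mul_unit hu, hP.sigma, he], ?_⟩
    have hdeg : deg (α' + Pi.single j 1 + β) = deg (α' + β) + 1 := by
      rw [add_right_comm, deg_add, deg_single]
    rw [hdeg, ← x_mul_mono _ _ _ hj, add_right_comm]
    convert add_mem (S.x_mul_mem_filt hc j hmem) hmem' using 1
    noncomm_ring

/-- The elements of `A` all of whose coefficients lie in the left ideal `P`. -/
noncomputable def coefIdeal (S : SkewPBW R A n) (P : Ideal R) : AddSubgroup A where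
  carrier := {h | ∀ γ, S.coef γ h ∈ P}
  add_mem' ha hb γ := by rw [map_add]; exact P.add_mem (ha γ) (hb γ)
  zero_mem' γ := by rw [map_zero]; exact P.zero_mem
  neg_mem' ha γ := by rw [map_neg]; exact P.neg_mem (ha γ)

theorem StablePrime.smul_mem {S : SkewPBW R A n} {P : Ideal R} (hP : S.StablePrime P) {p : R}
    (hp : p ∈ P) (h : A) : S.ι p * h ∈ S.coefIdeal P := fun γ => by
  rw [coef_smul]
  exact hP.mul_right _ _ hp

theorem StablePrime.x_mul_mem {S : SkewPBW R A n} {P : Ideal R} (hP : S.StablePrime P)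
    (i : Fin n) {h : A} (hh : h ∈ S.coefIdeal P) : S.x i * h ∈ S.coefIdeal P := by
  rw [S.expand h, Finset.mul_sum]
  refine sum_mem fun γ _ => ?_
  rw [← mul_assoc, S.comm, add_mul, mul_assoc]
  exact add_mem (hP.smul_mem ((hP.sigma _ _).2 (hh γ)) _) (hP.smul_mem (hP.delta _ _ (hh γ)) _)

theorem StablePrime.mono_mul_mem {S : SkewPBW R A n} {P : Ideal R} (hP : S.StablePrime P)
    (α : Fin n → ℕ) {h : A} (hh : h ∈ S.coefIdeal P) : S.mono α * h ∈ S.coefIdeal P := by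
  unfold mono
  induction List.finRange n with
  | nil => simpa using hh
  | cons a l ih =>
    rw [List.map_cons, List.prod_cons, mul_assoc]
    induction α a with
    | zero => simpa using ih
    | succ k ihk =>
      rw [pow_succ', mul_assoc]
      exact hP.x_mul_mem a ihk

/-- The degree-lexicographic weight of an exponent. -/
def wt (γ : Fin n → ℕ) : ℕ ×ₗ Lex (Fin n → ℕ) := toLex (deg γ, toLex γ)

theorem wt_add (α β : Fin n → ℕ) : wt (α + β) = wt α + wt β := by
  unfold wt
  rw [deg_add]
  rfl

theorem wt_inj {α β : Fin n → ℕ} (h : wt α = wt β) : α = β := by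
  have := congrArg (fun z => ofLex (ofLex z).2) h
  exact this

theorem wt_lt {α β : Fin n → ℕ} (h : deg α < deg β) : wt α < wt β :=
  Prod.Lex.toLex_lt_toLex.2 (Or.inl h)

/-- An element outside `coefIdeal P` has a degree-lexicographically leading coefficient
outside `P`. -/
theorem exists_lead (S : SkewPBW R A n) {P : Ideal R} {f : A} (hf : f ∉ S.coefIdeal P) :
    ∃ α, S.coef α f ∉ P ∧ ∀ γ, S.coef γ f ∉ P → wt γ ≤ wt α := by
  classical
  have hex : ∃ γ, S.coef γ f ∉ P := not_forall.1 hf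
  have hsupp : ∀ γ, S.coef γ f ∉ P → γ ∈ (S.comb.symm f).support := fun γ hγ =>
    Finsupp.mem_support_iff.2 fun h0 => hγ (by
      have : S.coef γ f = 0 := h0
      rw [this]; exact P.zero_mem)
  obtain ⟨γ₀, h₀⟩ := hex
  obtain ⟨α, hα, hmax⟩ := Finset.exists_max_image
    ((S.comb.symm f).support.filter fun γ => S.coef γ f ∉ P) wt
    ⟨γ₀, Finset.mem_filter.2 ⟨hsupp _ h₀, h₀⟩⟩
  exact ⟨α, (Finset.mem_filter.1 hα).2, fun γ hγ =>
    hmax γ (Finset.mem_filter.2 ⟨hsupp _ hγ, hγ⟩)⟩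

/-- `A` modulo `coefIdeal P` has no zero divisors: modulo `P`, the coefficient of a product at
the sum of the two leading exponents comes from the leading terms alone. -/
theorem StablePrime.mul_notMem {S : SkewPBW R A n} {P : Ideal R} (hP : S.StablePrime P)
    (hc : S.CCentral) {f g : A} (hf : f ∉ S.coefIdeal P) (hg : g ∉ S.coefIdeal P) :
    f * g ∉ S.coefIdeal P := by
  classical
  obtain ⟨α, hα, hαmax⟩ := S.exists_lead hf
  obtain ⟨β, hβ, hβmax⟩ := S.exists_lead hg
  intro hfg
  let t : (Fin n → ℕ) × (Fin n → ℕ) → R := fun p =>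
    S.coef p.1 f * S.coef (α + β) (S.mono p.1 * (S.ι (S.coef p.2 g) * S.mono p.2))
  have hsum : S.coef (α + β) (f * g) =
      ∑ p ∈ (S.comb.symm f).support ×ˢ (S.comb.symm g).support, t p := by
    conv_lhs => rw [S.expand f, S.expand g, Finset.sum_mul_sum, ← Finset.sum_product', map_sum]
    refine Finset.sum_congr rfl fun p _ => ?_
    rw [mul_assoc, coef_smul]
  have hne : ∀ {γ h}, S.coef γ h ∉ P → γ ∈ (S.comb.symm h).support := fun {γ h} hγ =>
    Finsupp.mem_support_iff.2 fun h0 => hγ (by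
      have : S.coef γ h = 0 := h0
      rw [this]; exact P.zero_mem)
  have hrest : ∀ p, p ≠ (α, β) → t p ∈ P := by
    rintro ⟨a, b⟩ hab
    by_cases ha : S.coef a f ∈ P
    · exact hP.mul_right _ _ ha
    by_cases hb : S.coef b g ∈ P
    · exact P.mul_mem_left _ (hP.mono_mul_mem a (hP.smul_mem hb _) (α + β))
    have h1 := hαmax a ha
    have h2 := hβmax b hb
    have hlt : wt (a + b) < wt (α + β) := by
      rw [wt_add, wt_add]
      rcases h1.lt_or_eq with h1' | h1'
      · exact add_lt_add_of_lt_of_le h1' h2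
      · rcases h2.lt_or_eq with h2' | h2'
        · exact add_lt_add_of_le_of_lt h1 h2'
        · exact absurd (Prod.ext (wt_inj h1') (wt_inj h2')) hab
    obtain ⟨e, -, he⟩ := hP.mono_mul_mod hc (S.coef b g) a b
    have h3 := he (α + β) (by
      by_contra hcon
      exact absurd (wt_lt (not_le.1 hcon)) hlt.not_gt)
    have hab' : a + b ≠ α + β := fun h => hlt.ne (congrArg wt h)
    rw [map_sub, coef_term, if_neg hab', sub_zero] at h3
    change S.coef a f * _ ∈ P
    rw [h3, mul_zero]
    exact P.zero_mem
  have hlead : t (α, β) ∉ P := by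
    obtain ⟨e, he, hmem⟩ := hP.mono_mul_mod hc (S.coef β g) α β
    have h3 := hmem (α + β) le_rfl
    rw [map_sub, coef_term, if_pos rfl, sub_eq_zero] at h3
    change S.coef α f * _ ∉ P
    rw [h3]
    exact fun h => (hP.prime _ _ h).elim hα fun h' => hβ (he.1 h')
  have hfg' := hfg (α + β)
  rw [hsum, ← Finset.add_sum_erase _ _ (Finset.mk_mem_product (hne hα) (hne hβ))] at hfg'
  refine hlead ((P.add_mem_iff_left (P.sum_mem fun p hp => ?_)).1 hfg')
  exact hrest p (Finset.ne_of_mem_erase hp)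

theorem StablePrime.not_isNilpotent {S : SkewPBW R A n} {P : Ideal R} (hP : S.StablePrime P)
    (hc : S.CCentral) {h : A} (hh : h ∉ S.coefIdeal P) : ¬ IsNilpotent h := by
  have hpow : ∀ k : ℕ, h ^ k ∉ S.coefIdeal P := by
    intro k
    induction k with
    | zero =>
      intro h1
      have h2 := h1 0
      rw [pow_zero, ← S.mono_zero, ← one_mul (S.mono 0), ← map_one S.ι, coef_term,
        if_pos rfl] at h2
      exact hP.one_notMem h2
    | succ k ih => rw [pow_succ]; exact hP.mul_notMem hc ih hh
  rintro ⟨k, hk⟩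
  exact hpow k (hk ▸ zero_mem _)

/-! ### Compatibility and minimal primes -/

theorem iterPow_list {X : Type*} (f : Fin n → X → X) (i : Fin n) (l : List (Fin n))
    (hl : l.Nodup) :
    ((l.map fun j => (f j)^[(Pi.single i 1 : Fin n → ℕ) j]).foldr (· ∘ ·) id) =
      if i ∈ l then f i else id := by
  induction l with
  | nil => simp
  | cons a l ih =>
    rw [List.nodup_cons] at hl
    rw [List.map_cons, List.foldr_cons, ih hl.2]
    by_cases hia : i = a
    · subst hia
      simp [hl.1]
    · simp [hia, Ne.symm hia]

theorem iterPow_single {X : Type*} (f : Fin n → X → X) (i : Fin n) :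
    iterPow f (Pi.single i 1) = f i := by
  unfold iterPow
  rw [iterPow_list f i _ (List.nodup_finRange n), if_pos (List.mem_finRange i)]

theorem SigmaCompatible.sigma_iff {S : SkewPBW R A n} (h : S.SigmaCompatible) (a b : R)
    (i : Fin n) : a * S.σ i b = 0 ↔ a * b = 0 := by
  have := h a b (Pi.single i 1)
  rwa [sigmaPow, iterPow_single] at this

theorem DeltaCompatible.delta {S : SkewPBW R A n} (h : S.DeltaCompatible) {a b : R}
    (hab : a * b = 0) (i : Fin n) : a * S.δ i b = 0 := by
  have := h a b hab (Pi.single i 1)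
  rwa [deltaPow, iterPow_single] at this

/-- In a reversible ring, compatibility may be applied to a factor inside a nilpotent product. -/
theorem nil_transfer (hrev : IsReversible R) {s x y : R}
    (h : ∀ a : R, a * x = 0 → a * y = 0) (hn : IsNilpotent (s * x)) : IsNilpotent (s * y) := by
  refine nil_subst (fun u v huv => ?_) hn
  have h1 : v * (u * s) * x = 0 := by
    have := hrev _ _ huv
    simpa only [mul_assoc] using this
  have h2 := hrev v (u * (s * y)) (by simpa only [mul_assoc] using h _ h1)
  exact h2

/-- Every non-nilpotent element of a reversible `(Σ,Δ)`-compatible ring is avoided by an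
invariant completely prime ideal. -/
theorem exists_stablePrime (S : SkewPBW R A n) (hcomp : S.SigmaDeltaCompatible)
    (hrev : IsReversible R) {d : R} (hd : ¬ IsNilpotent d) :
    ∃ P : Ideal R, S.StablePrime P ∧ d ∉ P := by
  obtain ⟨P, hdP, h1, hright, hprime, hmin⟩ := hrev.exists_minimal_prime hd
  have hnil : ∀ x, IsNilpotent x → x ∈ P := by
    rintro x ⟨k, hk⟩
    have hpow : ∀ j : ℕ, x ^ j ∈ P → x ∈ P := by
      intro j
      induction j with
      | zero => intro h; exact absurd (by simpa using h) h1
      | succ j ih => rw [pow_succ]; exact fun h => (hprime _ _ h).elim ih id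
    exact hpow k (hk ▸ P.zero_mem)
  have htransfer : ∀ x y, (∀ a : R, a * x = 0 → a * y = 0) → x ∈ P → y ∈ P := by
    intro x y h hx
    obtain ⟨s, hs, hsx⟩ := hmin x hx
    exact (hprime _ _ (hnil _ (nil_transfer hrev h hsx))).resolve_left hs
  exact ⟨P, ⟨h1, hright, hprime,
    fun i x => ⟨htransfer _ _ fun a => (hcomp.1.sigma_iff a x i).1,
      htransfer _ _ fun a => (hcomp.1.sigma_iff a x i).2⟩,
    fun i x => htransfer _ _ fun a ha => hcomp.2.delta ha i⟩, hdP⟩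

theorem coef_sum (S : SkewPBW R A n) {m : ℕ} (a : Fin m → R) (X : Fin m → Fin n → ℕ)
    (hX : Function.Injective X) (i : Fin m) :
    S.coef (X i) (∑ k, S.ι (a k) * S.mono (X k)) = a i := by
  simp [map_sum, coef_term, hX.eq_iff]

end SkewPBW

/-- Let `A` be a skew PBW extension of `R` with the constants
`c_{i,j}` of condition (iv) central in `R`.  If `R` is `(Σ,Δ)`-compatible and
reversible, then `R` is skew `Π`-Armendariz with respect to `A`: whenever
`f = Σᵢ aᵢXᵢ` and `g = Σⱼ bⱼYⱼ` in `A` have `fg` nilpotent in `A`, each product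
`aᵢ bⱼ` is nilpotent in `R`. -/
theorem reversible_compatible_skewPiArmendariz {R A : Type*} [Ring R] [Ring A] {n : ℕ}
    (S : SkewPBW R A n) (hc : S.CCentral)
    (hcomp : S.SigmaDeltaCompatible) (hrev : IsReversible R) :
    S.SkewPiArmendariz := by
  intro m t a X b Y hX hY hnil i j
  by_contra hab
  obtain ⟨P, hP, hd⟩ := S.exists_stablePrime hcomp hrev hab
  refine hP.not_isNilpotent hc (hP.mul_notMem hc (fun hf => hd ?_) (fun hg => hd ?_)) hnil
  · exact hP.mul_right _ _ (S.coef_sum a X hX i ▸ hf (X i))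
  · exact P.mul_mem_left _ (S.coef_sum b Y hY j ▸ hg (Y j))
end
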